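/- Let M be a matroid with finite ground set E, rank(M) = r ≥ 1, and let k ≥ 0 be an integer. Every k-fault-tolerant spanning set B ⊆ E contains a k-fault-tolerant spanning subset B' ⊆ B with |B'| ≤ (k+1)·r. -/

import Mathlib

open Set

/-- The rank of a set `X` in a matroid `M`: the maximum cardinality of an
independent subset of `X`. -/
noncomputable def mrank {α : Type*} (M : Matroid α) (X : Set α) : ℕ :=
  sSup {n : ℕ | ∃ I, M.Indep I ∧ I ⊆ X ∧ I.ncard = n}

/-- `B` is a `k`-fault-tolerant spanning set of `M`: `B ⊆ M.E` and removing any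
at most `k` elements from `B` leaves a set of full rank. -/
def FTSpanning {α : Type*} (M : Matroid α) (k : ℕ) (B : Set α) : Prop :=
  B ⊆ M.E ∧ ∀ F ⊆ B, F.ncard ≤ k → mrank M (B \ F) = mrank M M.E

/-- `B` is a `k`-fault-tolerant basis of `M`: a `k`-fault-tolerant spanning set of
minimum cardinality among all `k`-fault-tolerant spanning sets. -/
def FTBasis {α : Type*} (M : Matroid α) (k : ℕ) (B : Set α) : Prop :=
  FTSpanning M k B ∧ ∀ B', FTSpanning M k B' → B.ncard ≤ B'.ncard

/-- `X` is `h`-uniform in `M`: `rank(X) = h` and every subset of `X` of size `h`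
has rank `h`. -/
def HUniform {α : Type*} (M : Matroid α) (h : ℕ) (X : Set α) : Prop :=
  mrank M X = h ∧ ∀ Y ⊆ X, Y.ncard = h → mrank M Y = h

/-!
Take a basis `I₀` of `B`, then a basis `I₁` of `B \ I₀`, and so on for `k + 1` rounds, and let `B'`
be the union of these bases. They are disjoint, so a set `F` of at most `k` elements misses some
`Iⱼ`. The first such `Iⱼ` spans everything in `B` outside `I₀ ∪ ⋯ ∪ Iⱼ₋₁`, while the elements of
`I₀ ∪ ⋯ ∪ Iⱼ₋₁` that are not in `F` belong to `B' \ F` already. Hence `B' \ F` and `B \ F` have the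
same closure.
-/

section

variable {α : Type*} {M : Matroid α}

lemma coe_mrank_eq_eRk {X : Set α} (hX : M.IsRkFinite X) : (mrank M X : ℕ∞) = M.eRk X := by
  obtain ⟨r, hr⟩ := ENat.ne_top_iff_exists.1 (Matroid.eRk_ne_top_iff.2 hX)
  obtain ⟨I, hIX, hI, hIr⟩ := Matroid.le_eRk_iff.1 hr.le
  have hgreatest : IsGreatest {n : ℕ | ∃ I, M.Indep I ∧ I ⊆ X ∧ I.ncard = n} r := by
    refine ⟨⟨I, hI, hIX, by simp [ncard_def, hIr]⟩, ?_⟩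
    rintro _ ⟨J, hJ, hJX, rfl⟩
    have hJr : (J.ncard : ℕ∞) ≤ r :=
      (ncard_le_encard J).trans ((hJ.encard_le_eRk_of_subset hJX).trans hr.ge)
    exact_mod_cast hJr
  rw [mrank, hgreatest.csSup_eq, hr]

lemma mrank_eq_of_closure_eq [M.RankFinite] {X Y : Set α} (h : M.closure X = M.closure Y) :
    mrank M X = mrank M Y := by
  have hcoe : (mrank M X : ℕ∞) = mrank M Y := by
    rw [coe_mrank_eq_eRk (M.isRkFinite_set X), coe_mrank_eq_eRk (M.isRkFinite_set Y),
      ← M.eRk_closure_eq X, h, M.eRk_closure_eq Y]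
  exact_mod_cast hcoe

lemma union_sdiff_eq_of_disjoint {I C : Set α} (h : Disjoint I C) (F : Set α) :
    (I ∪ C) \ F = I \ F ∪ C \ (F \ I) := by
  rw [union_sdiff_distrib, sdiff_sdiff_right, h.symm.inter_eq, union_empty]

lemma closure_union_sdiff_congr {I C D F : Set α} (hC : Disjoint I C) (hD : Disjoint I D)
    (h : M.closure (C \ (F \ I)) = M.closure (D \ (F \ I))) :
    M.closure ((I ∪ C) \ F) = M.closure ((I ∪ D) \ F) := by
  rw [union_sdiff_eq_of_disjoint hC, union_sdiff_eq_of_disjoint hD]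
  exact M.closure_union_congr_right h

lemma closure_sdiff_eq_of_isBasis' {I B B' F : Set α} (hI : M.IsBasis' I B)
    (hIB' : I ⊆ B') (hB'B : B' ⊆ B) (hIF : Disjoint I F) :
    M.closure (B' \ F) = M.closure (B \ F) := by
  refine (M.closure_subset_closure (sdiff_subset_sdiff_left hB'B)).antisymm ?_
  calc M.closure (B \ F) ⊆ M.closure B := M.closure_subset_closure sdiff_subset
    _ = M.closure I := hI.closure_eq_closure.symm
    _ ⊆ M.closure (B' \ F) := M.closure_subset_closure (subset_sdiff.2 ⟨hIB', hIF⟩)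

lemma encard_sdiff_lt_of_not_disjoint {F I : Set α} (hF : F.Finite) (h : ¬ Disjoint I F) :
    (F \ I).encard < F.encard :=
  (hF.subset sdiff_subset).encard_lt_encard
    (sdiff_subset.ssubset_of_ne fun heq ↦ h (sdiff_eq_left.1 heq).symm)

lemma exists_subset_encard_le_forall_closure_sdiff_eq (M : Matroid α) (n : ℕ) (B : Set α) :
    ∃ B' ⊆ B, B'.encard ≤ n * M.eRk B ∧
      ∀ F : Set α, F.encard < n → M.closure (B' \ F) = M.closure (B \ F) := by
  induction n generalizing B with
  | zero => exact ⟨∅, empty_subset B, by simp, fun F hF ↦ absurd hF (by simp)⟩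
  | succ n ih =>
    obtain ⟨I, hI⟩ := M.exists_isBasis' B
    obtain ⟨C, hCB, hCcard, hCcl⟩ := ih (B \ I)
    have hsub : I ∪ C ⊆ B := union_subset hI.subset (hCB.trans sdiff_subset)
    refine ⟨I ∪ C, hsub, ?_, fun F hF ↦ ?_⟩
    · calc (I ∪ C).encard ≤ I.encard + C.encard := encard_union_le I C
        _ ≤ M.eRk B + n * M.eRk (B \ I) := add_le_add hI.encard_eq_eRk.le hCcard
        _ ≤ M.eRk B + n * M.eRk B := by gcongr; exact M.eRk_mono sdiff_subset
        _ = (n + 1 : ℕ) * M.eRk B := by push_cast; ring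
    · by_cases hIF : Disjoint I F
      · exact closure_sdiff_eq_of_isBasis' hI subset_union_left hsub hIF
      have hlt : (F \ I).encard < n :=
        (encard_sdiff_lt_of_not_disjoint (finite_of_encard_le_coe hF.le) hIF).trans_le
          (Order.le_of_lt_add_one (by exact_mod_cast hF))
      calc M.closure ((I ∪ C) \ F)
          = M.closure ((I ∪ B \ I) \ F) :=
            closure_union_sdiff_congr (disjoint_sdiff_right.mono_right hCB) disjoint_sdiff_right
              (hCcl (F \ I) hlt)
        _ = M.closure (B \ F) := by rw [union_sdiff_cancel hI.subset]

theorem statement2_general (M : Matroid α) [M.RankFinite] {k : ℕ} {B : Set α}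
    (hB : FTSpanning M k B) :
    ∃ B' ⊆ B, FTSpanning M k B' ∧ B'.ncard ≤ (k + 1) * mrank M M.E := by
  obtain ⟨B', hB'B, hcard, hcl⟩ := exists_subset_encard_le_forall_closure_sdiff_eq M (k + 1) B
  have hencard : B'.encard ≤ ((k + 1) * mrank M M.E : ℕ) := by
    rw [Nat.cast_mul, coe_mrank_eq_eRk (M.isRkFinite_set M.E)]
    exact hcard.trans (by gcongr; exact M.eRk_mono hB.1)
  have hfin : B'.Finite := finite_of_encard_le_coe hencard
  refine ⟨B', hB'B, ⟨hB'B.trans hB.1, fun F hF hFk ↦ ?_⟩, ?_⟩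
  · have hFlt : F.encard < (k + 1 : ℕ) := by
      rw [← (hfin.subset hF).cast_ncard_eq]
      exact_mod_cast Nat.lt_succ_of_le hFk
    rw [mrank_eq_of_closure_eq (hcl F hFlt)]
    exact hB.2 F (hF.trans hB'B) hFk
  · exact_mod_cast (ncard_le_encard B').trans hencard

end

/-- Every `k`-fault-tolerant spanning set `B` of a matroid of rank `r ≥ 1`
with finite ground set contains a `k`-fault-tolerant spanning subset `B'` with
`|B'| ≤ (k+1)·r`. -/
theorem statement2 {α : Type*} (M : Matroid α) (hE : M.E.Finite)
    (r : ℕ) (hr : r = mrank M M.E) (hr1 : 1 ≤ r) (k : ℕ)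
    (B : Set α) (hB : FTSpanning M k B) :
    ∃ B' ⊆ B, FTSpanning M k B' ∧ B'.ncard ≤ (k + 1) * r := by
  have : M.Finite := ⟨hE⟩
  exact hr ▸ statement2_general M hB
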